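/- Let (q_i, σ_i)_{i=1}^m be a linearly independent (LI) ensemble on ℂ^n with r_i = rank σ_i, and let ζ_{ij} ∈ ℂ^n (1 ≤ i ≤ m, 1 ≤ j ≤ r_i) be vectors forming a basis of ℂ^n with q_iσ_i = ∑_{j=1}^{r_i} ζ_{ij}ζ_{ij}* for each i. Let F be the n×n Gram matrix of the ζ_{ij} (entries ⟨ζ_{i₁j₁}, ζ_{i₂j₂}⟩, conjugate-linear in the first argument, indices ordered by groups i), let F^{1/2} be its positive definite square root, and let H^{(ii)} be the i-th r_i×r_i diagonal block of F^{1/2}, which is positive definite. Define φ_{ij} = ∑_{k=1}^{r_i} ((H^{(ii)})^{-1/2})_{kj} ζ_{ik}, c = (∑_{i,j} ‖φ_{ij}‖²)^{-1}, p_i = c ∑_{j} ‖φ_{ij}‖², and ρ_i = (∑_j φ_{ij}φ_{ij}*)/(∑_j ‖φ_{ij}‖²). Then (p_i, ρ_i)_{i=1}^m is an LI ensemble with the column space of ρ_i equal to the column space of σ_i for every i, and the pretty good measurement of (q_i, σ_i) is an optimal POVM for the minimum error discrimination of (p_i, ρ_i). -/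

import Mathlib

open Matrix
open scoped ComplexOrder

noncomputable section

/-- Rank-one outer product `x x*` as an `n × n` complex matrix. -/
def outer {n : ℕ} (x : Fin n → ℂ) : Matrix (Fin n) (Fin n) ℂ :=
  Matrix.vecMulVec x (star x)

/-- A POVM indexed by `ι`: positive semidefinite elements summing to the identity. -/
def IsPOVM {ι : Type} [Fintype ι] {n : ℕ} (E : ι → Matrix (Fin n) (Fin n) ℂ) : Prop :=
  (∀ i, (E i).PosSemidef) ∧ ∑ i, E i = 1

/-- Success probability of the POVM `E` for the ensemble `(p, ρ)`. -/
def succProb {ι : Type} [Fintype ι] {n : ℕ} (p : ι → ℝ)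
    (ρ E : ι → Matrix (Fin n) (Fin n) ℂ) : ℝ :=
  ∑ i, p i * ((ρ i * E i).trace).re

/-- `P` is a POVM maximizing the success probability for the ensemble `(p, ρ)`. -/
def IsOptimal {ι : Type} [Fintype ι] {n : ℕ} (p : ι → ℝ)
    (ρ P : ι → Matrix (Fin n) (Fin n) ℂ) : Prop :=
  IsPOVM P ∧ ∀ E, IsPOVM E → succProb p ρ E ≤ succProb p ρ P

/-- An ensemble of states: positive probabilities summing to 1, states positive
semidefinite of trace 1. -/
def IsEnsemble {ι : Type} [Fintype ι] {n : ℕ} (p : ι → ℝ)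
    (ρ : ι → Matrix (Fin n) (Fin n) ℂ) : Prop :=
  (∀ i, 0 < p i) ∧ ∑ i, p i = 1 ∧ (∀ i, (ρ i).PosSemidef) ∧ ∀ i, (ρ i).trace = 1

/-- A linearly independent (LI) ensemble: the ranks sum to `n` and the column spaces
of the states together span `ℂ^n`. -/
def IsLIEnsemble {ι : Type} [Fintype ι] {n : ℕ} (p : ι → ℝ)
    (ρ : ι → Matrix (Fin n) (Fin n) ℂ) : Prop :=
  IsEnsemble p ρ ∧ (∑ i, (ρ i).rank = n) ∧
    (⨆ i, LinearMap.range (ρ i).mulVecLin) = ⊤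

/-- A projective measurement: mutually orthogonal Hermitian idempotents summing to
the identity. -/
def IsProjectiveMeasurement {ι : Type} [Fintype ι] {n : ℕ}
    (P : ι → Matrix (Fin n) (Fin n) ℂ) : Prop :=
  (∀ i j, i ≠ j → P i * P j = 0) ∧ (∀ i, P i * P i = P i) ∧
    (∀ i, (P i).IsHermitian) ∧ ∑ i, P i = 1

/-- The pretty good measurement of the ensemble `(q, σ)` (with elements
`S^{-1/2} qᵢσᵢ S^{-1/2}`, `S = ∑ qⱼσⱼ`, `S^{1/2}` the unique positive definite square
root of `S`) is an optimal POVM for the minimum error discrimination of `(p, ρ)`. -/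
def PGMIsOptimal {m n : ℕ} (q : Fin m → ℝ) (σ : Fin m → Matrix (Fin n) (Fin n) ℂ)
    (p : Fin m → ℝ) (ρ : Fin m → Matrix (Fin n) (Fin n) ℂ) : Prop :=
  ∀ R : Matrix (Fin n) (Fin n) ℂ, R.PosDef → R * R = ∑ j, (q j : ℂ) • σ j →
    IsOptimal p ρ (fun i => R⁻¹ * ((q i : ℂ) • σ i) * R⁻¹)


/-- Trace of a product of positive semidefinite matrices is nonnegative. -/
lemma aux_trace_nonneg {n : ℕ} {A B : Matrix (Fin n) (Fin n) ℂ} (hA : A.PosSemidef)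
    (hB : B.PosSemidef) : 0 ≤ ((A * B).trace).re := by
  obtain ⟨k, v, rfl⟩ := Matrix.posSemidef_iff_eq_sum_vecMulVec.mp hB
  rw [Finset.mul_sum, Matrix.trace_sum, Complex.re_sum]
  refine Finset.sum_nonneg fun i _ => ?_
  have h := hA.dotProduct_mulVec_nonneg (v i)
  rw [Matrix.mul_vecMulVec, Matrix.trace_vecMulVec, dotProduct_comm]
  exact (Complex.le_def.mp h).1

/-- Uniqueness of the positive square root. -/
lemma aux_sqrt_unique {N : Type} [Fintype N] [DecidableEq N] {A B : Matrix N N ℂ}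
    (hA : A.PosDef) (hB : B.PosSemidef) (h : A * A = B * B) : A = B := by
  have hAB : (A + B).PosDef := hA.add_posSemidef hB
  have hC : (A - B)ᴴ = A - B := (hA.isHermitian.sub hB.isHermitian)
  have hps := hAB.posSemidef.conjTranspose_mul_mul_same (A - B)
  have htr : ((A - B)ᴴ * (A + B) * (A - B)).trace = 0 := by
    rw [hC]
    have e : (A - B) * (A + B) = A * B - B * A := by
      rw [sub_mul, mul_add, mul_add, h]; abel
    rw [e, mul_sub, sub_mul, sub_mul, Matrix.trace_sub, Matrix.trace_sub, Matrix.trace_sub]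
    have e1 : (A * B * A).trace = (A * A * B).trace := by
      rw [Matrix.trace_mul_cycle]
    have e2 : (B * A * A).trace = (A * A * B).trace := by
      rw [Matrix.mul_assoc, Matrix.trace_mul_comm]
    have e3 : (A * B * B).trace = (B * A * B).trace := by
      rw [Matrix.trace_mul_cycle]
    rw [e1, e2, e3]; ring
  have h0 := (hps.trace_eq_zero_iff).mp htr
  have hz : A - B = 0 := by
    rw [Matrix.ext_iff_mulVec]
    intro x
    by_contra hx
    have hx' : (A - B) *ᵥ x ≠ 0 := by simpa using hx
    have := hAB.dotProduct_mulVec_pos hx'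
    rw [star_mulVec, ← dotProduct_mulVec, mulVec_mulVec, mulVec_mulVec,
      h0] at this
    simp at this
  exact sub_eq_zero.mp hz

/-- `A Aᴴ` and `A` have the same column space. -/
lemma aux_range {n k : ℕ} (A : Matrix (Fin n) (Fin k) ℂ) :
    LinearMap.range (A * Aᴴ).mulVecLin = LinearMap.range A.mulVecLin := by
  apply Submodule.eq_of_le_of_finrank_eq
  · rw [Matrix.mulVecLin_mul]
    exact LinearMap.range_comp_le_range _ _
  · exact Matrix.rank_self_mul_conjTranspose A

lemma aux_range_mul {n k : ℕ} (A : Matrix (Fin n) (Fin k) ℂ) (K : Matrix (Fin k) (Fin k) ℂ)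
    (hK : IsUnit K) :
    LinearMap.range (A * K).mulVecLin = LinearMap.range A.mulVecLin := by
  apply le_antisymm
  · rw [Matrix.mulVecLin_mul]
    exact LinearMap.range_comp_le_range _ _
  · have : A = (A * K) * K⁻¹ := by
      rw [Matrix.mul_assoc, Matrix.mul_nonsing_inv _ ((Matrix.isUnit_iff_isUnit_det K).mp hK),
        Matrix.mul_one]
    conv_lhs => rw [this, Matrix.mulVecLin_mul]
    exact LinearMap.range_comp_le_range _ _

lemma aux_range_smul {n : ℕ} (A : Matrix (Fin n) (Fin n) ℂ) (c : ℂ) (hc : c ≠ 0) :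
    LinearMap.range (c • A).mulVecLin = LinearMap.range A.mulVecLin := by
  have : (c • A).mulVecLin = c • A.mulVecLin := by
    ext x
    simp [Matrix.smul_mulVec]
  rw [this]
  exact LinearMap.range_smul _ _ hc

/-- The matrix whose columns are the given vectors. -/
def colMat {n : ℕ} {N : Type} (v : N → (Fin n → ℂ)) : Matrix (Fin n) N ℂ :=
  Matrix.of fun x a => v a x

lemma aux_outer_sum {n : ℕ} {N : Type} [Fintype N] (v : N → (Fin n → ℂ)) :
    ∑ a, outer (v a) = colMat v * (colMat v)ᴴ := by
  ext x y
  simp [outer, colMat, Matrix.sum_apply, Matrix.mul_apply, vecMulVec_apply]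

lemma aux_trace_outer {n : ℕ} {N : Type} [Fintype N] (v : N → (Fin n → ℂ)) :
    (((∑ a, (star (v a) ⬝ᵥ v a).re : ℝ) : ℂ)) = (colMat v * (colMat v)ᴴ).trace := by
  rw [← aux_outer_sum, Matrix.trace_sum, Complex.ofReal_sum]
  refine Finset.sum_congr rfl fun a _ => ?_
  rw [outer, Matrix.trace_vecMulVec, dotProduct_comm]
  have h : 0 ≤ v a ⬝ᵥ star (v a) := by
    rw [dotProduct_comm]; exact dotProduct_star_self_nonneg (v a)
  exact (Complex.ext rfl (by simpa using (Complex.le_def.mp h).2))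

/-- Sufficient optimality condition. -/
lemma aux_optimal {ι : Type} [Fintype ι] {n : ℕ} (p : ι → ℝ)
    (ρ P : ι → Matrix (Fin n) (Fin n) ℂ) (hP : IsPOVM P) (Y : Matrix (Fin n) (Fin n) ℂ)
    (hY : ∀ i, (Y - (p i : ℂ) • ρ i).PosSemidef)
    (htr : ∑ i, (((p i : ℂ) • ρ i) * P i).trace = Y.trace) : IsOptimal p ρ P := by
  have key : ∀ E : ι → Matrix (Fin n) (Fin n) ℂ,
      succProb p ρ E = ∑ i, ((((p i : ℂ) • ρ i) * E i).trace).re := by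
    intro E
    refine Finset.sum_congr rfl fun i _ => ?_
    rw [Matrix.smul_mul, Matrix.trace_smul, smul_eq_mul, Complex.re_ofReal_mul]
  refine ⟨hP, fun E hE => ?_⟩
  rw [key, key, ← Complex.re_sum (f := fun i => (((p i : ℂ) • ρ i) * P i).trace), htr]
  have hYE : Y.trace.re = ∑ i, ((Y * E i).trace).re := by
    rw [← Complex.re_sum, ← Matrix.trace_sum, ← Finset.mul_sum, hE.2, Matrix.mul_one]
  rw [hYE]
  refine Finset.sum_le_sum fun i _ => ?_
  have := aux_trace_nonneg (hY i) (hE.1 i)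
  rw [sub_mul, Matrix.trace_sub, Complex.sub_re] at this
  linarith

/-- Schur-complement type inequality. -/
lemma aux_schur {n k : ℕ} (R : Matrix (Fin n) (Fin n) ℂ) (hR : R.PosDef)
    (Z : Matrix (Fin n) (Fin k) ℂ) (G : Matrix (Fin k) (Fin k) ℂ) (hG : Gᴴ = G)
    (hGH : G * (Zᴴ * R⁻¹ * Z) = 1) : (R - Z * G * Zᴴ).PosSemidef := by
  have hu := (Matrix.isUnit_iff_isUnit_det R).mp hR.isUnit
  have hRi : (R⁻¹)ᴴ = R⁻¹ := hR.inv.isHermitian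
  have h := hR.posSemidef.conjTranspose_mul_mul_same (1 - R⁻¹ * (Z * G * Zᴴ))
  have hM : (Z * G * Zᴴ)ᴴ = Z * G * Zᴴ := by
    simp [Matrix.conjTranspose_mul, hG, Matrix.mul_assoc]
  have hMM : (Z * G * Zᴴ) * (R⁻¹ * (Z * G * Zᴴ)) = Z * G * Zᴴ := by
    calc (Z * G * Zᴴ) * (R⁻¹ * (Z * G * Zᴴ)) = Z * (G * (Zᴴ * R⁻¹ * Z)) * (G * Zᴴ) := by
          simp only [Matrix.mul_assoc]
      _ = _ := by rw [hGH, Matrix.mul_one, Matrix.mul_assoc]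
  generalize Z * G * Zᴴ = M at *
  have e : (1 - R⁻¹ * M)ᴴ * R * (1 - R⁻¹ * M) = R - M := by
    rw [Matrix.conjTranspose_sub, Matrix.conjTranspose_mul, hRi, hM, Matrix.conjTranspose_one,
      sub_mul, Matrix.one_mul, Matrix.mul_assoc M, Matrix.nonsing_inv_mul _ hu, Matrix.mul_one,
      mul_sub, Matrix.mul_one, sub_mul, ← Matrix.mul_assoc R, Matrix.mul_nonsing_inv _ hu,
      Matrix.one_mul, hMM, sub_self, sub_zero]
  rwa [e] at h

/-- Construction of the inverse map `𝓡⁻¹`: from an LI ensemble `(q, σ)` with pure-state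
decomposition `qᵢσᵢ = ∑ⱼ ζᵢⱼζᵢⱼ*`, Gram matrix `F`, square root `F^{1/2}` with diagonal
blocks `H⁽ⁱⁱ⁾`, the vectors `φᵢⱼ = ∑ₖ ((H⁽ⁱⁱ⁾)^{-1/2})ₖⱼ ζᵢₖ` define an LI ensemble
`(p, ρ)` with the same supports, whose optimal POVM is the PGM of `(q, σ)`. -/
theorem stmt_14 {m n : ℕ} (q : Fin m → ℝ) (σ : Fin m → Matrix (Fin n) (Fin n) ℂ)
    (hens : IsLIEnsemble q σ)
    (r : Fin m → ℕ) (hr : ∀ i, (σ i).rank = r i)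
    (ζ : ((i : Fin m) × Fin (r i)) → (Fin n → ℂ))
    (hli : LinearIndependent ℂ ζ) (hsp : Submodule.span ℂ (Set.range ζ) = ⊤)
    (hdec : ∀ i, (q i : ℂ) • σ i = ∑ j : Fin (r i), outer (ζ ⟨i, j⟩))
    (F : Matrix ((i : Fin m) × Fin (r i)) ((i : Fin m) × Fin (r i)) ℂ)
    (hF : ∀ a b, F a b = star (ζ a) ⬝ᵥ ζ b)
    (RF : Matrix ((i : Fin m) × Fin (r i)) ((i : Fin m) × Fin (r i)) ℂ)
    (hRF : RF.PosDef) (hRF2 : RF * RF = F)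
    (K : ∀ i, Matrix (Fin (r i)) (Fin (r i)) ℂ)
    (hK : ∀ i, (K i).PosDef)
    (hK2 : ∀ i, (K i * K i) * (Matrix.of fun a b => RF ⟨i, a⟩ ⟨i, b⟩) = 1)
    (φ : ((i : Fin m) × Fin (r i)) → (Fin n → ℂ))
    (hφ : ∀ (i : Fin m) (j : Fin (r i)), φ ⟨i, j⟩ = ∑ k : Fin (r i), K i k j • ζ ⟨i, k⟩)
    (p : Fin m → ℝ)
    (hp : ∀ i, p i = (∑ j : Fin (r i), (star (φ ⟨i, j⟩) ⬝ᵥ φ ⟨i, j⟩).re) /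
        (∑ a : (i : Fin m) × Fin (r i), (star (φ a) ⬝ᵥ φ a).re))
    (ρ : Fin m → Matrix (Fin n) (Fin n) ℂ)
    (hρ : ∀ i, ρ i = (((∑ j : Fin (r i), (star (φ ⟨i, j⟩) ⬝ᵥ φ ⟨i, j⟩).re : ℝ) : ℂ))⁻¹ •
        ∑ j : Fin (r i), outer (φ ⟨i, j⟩)) :
    IsLIEnsemble p ρ ∧
    (∀ i, LinearMap.range (ρ i).mulVecLin = LinearMap.range (σ i).mulVecLin) ∧
    PGMIsOptimal q σ p ρ := by
  classical
  obtain ⟨⟨hq, hq1, hσ, hσ1⟩, hrk, htop⟩ := hens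
  set Zi : ∀ i, Matrix (Fin n) (Fin (r i)) ℂ := fun i => colMat fun j => ζ ⟨i, j⟩ with hZi
  set Φ : ∀ i, Matrix (Fin n) (Fin (r i)) ℂ := fun i => colMat fun j => φ ⟨i, j⟩ with hΦ
  have hqσ : ∀ i, (q i : ℂ) • σ i = Zi i * (Zi i)ᴴ := fun i => by
    rw [hdec i]; exact aux_outer_sum _
  have hΦZ : ∀ i, Φ i = Zi i * K i := by
    intro i
    ext x j
    simp [hΦ, hZi, colMat, hφ, Matrix.mul_apply, mul_comm]
  set s : Fin m → ℝ := fun i => ∑ j : Fin (r i), (star (φ ⟨i, j⟩) ⬝ᵥ φ ⟨i, j⟩).re with hs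
  have hstr : ∀ i, ((s i : ℝ) : ℂ) = (Φ i * (Φ i)ᴴ).trace := fun i => aux_trace_outer _
  have hρ' : ∀ i, ρ i = ((s i : ℝ) : ℂ)⁻¹ • (Φ i * (Φ i)ᴴ) := fun i => by
    rw [hρ i, aux_outer_sum]
  have hrange0 : ∀ i, LinearMap.range (Φ i * (Φ i)ᴴ).mulVecLin =
      LinearMap.range (σ i).mulVecLin := by
    intro i
    have hqi : (q i : ℂ) ≠ 0 := by exact_mod_cast (hq i).ne'
    rw [aux_range, hΦZ, aux_range_mul _ _ (hK i).isUnit, ← aux_range, ← hqσ,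
      aux_range_smul _ _ hqi]
  have hsne : ∀ i, s i ≠ 0 := by
    intro i h0
    have h1 := hstr i
    rw [h0, Complex.ofReal_zero, eq_comm,
      (Matrix.posSemidef_self_mul_conjTranspose (Φ i)).trace_eq_zero_iff] at h1
    have h2 := hrange0 i
    rw [h1, Matrix.mulVecLin_zero, LinearMap.range_zero, eq_comm, LinearMap.range_eq_bot] at h2
    have h3 : σ i = 0 := by
      rw [Matrix.ext_iff_mulVec]
      intro x
      have := congrArg (fun f => f x) h2
      simpa using this
    have := hσ1 i
    rw [h3] at this
    simp at this
  have hsnn : ∀ i, 0 ≤ s i := by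
    intro i
    have h := (Matrix.posSemidef_self_mul_conjTranspose (Φ i)).trace_nonneg
    rw [← hstr i] at h
    exact_mod_cast h
  have hspos : ∀ i, 0 < s i := fun i => lt_of_le_of_ne (hsnn i) (hsne i).symm
  have hm : (Finset.univ : Finset (Fin m)).Nonempty := by
    by_contra hne
    rw [Finset.not_nonempty_iff_eq_empty] at hne
    rw [hne] at hq1
    simp at hq1
  set T : ℝ := ∑ a : (i : Fin m) × Fin (r i), (star (φ a) ⬝ᵥ φ a).re with hT
  have hTs : T = ∑ i, s i := by
    rw [hT, Fintype.sum_sigma]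
  have hTpos : 0 < T := by
    rw [hTs]; exact Finset.sum_pos (fun i _ => hspos i) hm
  have hp' : ∀ i, p i = s i / T := hp
  have hrange : ∀ i, LinearMap.range (ρ i).mulVecLin = LinearMap.range (σ i).mulVecLin := by
    intro i
    rw [hρ' i, aux_range_smul _ _ (inv_ne_zero (by exact_mod_cast hsne i)), hrange0]
  refine ⟨⟨⟨fun i => ?_, ?_, fun i => ?_, fun i => ?_⟩, ?_, ?_⟩, hrange, ?_⟩
  · rw [hp']; exact div_pos (hspos i) hTpos
  · simp_rw [hp']
    rw [← Finset.sum_div, ← hTs, div_self hTpos.ne']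
  · rw [hρ' i]
    refine (Matrix.posSemidef_self_mul_conjTranspose (Φ i)).smul ?_
    rw [← Complex.ofReal_inv]
    exact_mod_cast (inv_nonneg.mpr (hsnn i))
  · rw [hρ' i, Matrix.trace_smul, ← hstr i, smul_eq_mul]
    exact inv_mul_cancel₀ (by exact_mod_cast hsne i)
  · refine Eq.trans ?_ hrk
    refine Finset.sum_congr rfl fun i _ => ?_
    rw [Matrix.rank, Matrix.rank, hrange]
  · rw [← htop]
    exact iSup_congr hrange
  · intro R hR hR2
    have hu := (Matrix.isUnit_iff_isUnit_det R).mp hR.isUnit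
    have hRi : (R⁻¹)ᴴ = R⁻¹ := hR.inv.isHermitian
    set Z : Matrix (Fin n) ((i : Fin m) × Fin (r i)) ℂ := colMat ζ with hZ
    have hS : R * R = Z * Zᴴ := by
      rw [hR2, ← aux_outer_sum, Fintype.sum_sigma]
      exact Finset.sum_congr rfl fun i _ => hdec i
    have hFZ : F = Zᴴ * Z := by
      ext a b
      simp [hF, hZ, colMat, Matrix.mul_apply, dotProduct]
    have hcancel : R⁻¹ * (R * R) * R⁻¹ = 1 := by
      rw [← Matrix.mul_assoc, Matrix.nonsing_inv_mul _ hu, Matrix.one_mul,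
        Matrix.mul_nonsing_inv _ hu]
    have hRFeq : RF = Zᴴ * R⁻¹ * Z := by
      refine aux_sqrt_unique hRF (hR.inv.posSemidef.conjTranspose_mul_mul_same Z) ?_
      rw [hRF2, hFZ]
      calc Zᴴ * Z = Zᴴ * (R⁻¹ * (R * R) * R⁻¹) * Z := by rw [hcancel, Matrix.mul_one]
        _ = _ := by rw [hS]; simp only [Matrix.mul_assoc]
    have hblock : ∀ i, (Matrix.of fun a b => RF ⟨i, a⟩ ⟨i, b⟩) = (Zi i)ᴴ * R⁻¹ * Zi i := by
      intro i
      ext a b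
      rw [hRFeq]
      simp [hZ, hZi, colMat, Matrix.mul_apply]
    have hGH : ∀ i, (K i * K i) * ((Zi i)ᴴ * R⁻¹ * Zi i) = 1 := fun i => by
      rw [← hblock]; exact hK2 i
    have hKh : ∀ i, (K i)ᴴ = K i := fun i => (hK i).isHermitian
    have hG : ∀ i, (K i * K i)ᴴ = K i * K i := fun i => by
      rw [Matrix.conjTranspose_mul, hKh]
    have hW : ∀ i, (p i : ℂ) • ρ i = ((T⁻¹ : ℝ) : ℂ) • (Zi i * (K i * K i) * (Zi i)ᴴ) := by
      intro i
      have hsi : ((s i : ℝ) : ℂ) ≠ 0 := by exact_mod_cast hsne i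
      have hTi : (T : ℂ) ≠ 0 := by exact_mod_cast hTpos.ne'
      rw [hρ' i, smul_smul, hp' i, hΦZ, Matrix.conjTranspose_mul, hKh]
      congr 1
      · push_cast
        field_simp
      · simp only [Matrix.mul_assoc]
    have hTi0 : (0 : ℂ) ≤ ((T⁻¹ : ℝ) : ℂ) := by
      exact_mod_cast (inv_nonneg.mpr hTpos.le)
    refine aux_optimal p ρ _ ⟨fun i => ?_, ?_⟩ (((T⁻¹ : ℝ) : ℂ) • R) (fun i => ?_) ?_
    · have h := (Matrix.posSemidef_self_mul_conjTranspose (Zi i)).conjTranspose_mul_mul_same R⁻¹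
      rw [hRi, ← hqσ] at h
      exact h
    · rw [← Finset.sum_mul, ← Finset.mul_sum, ← hR2, hcancel]
    · rw [hW, ← smul_sub]
      exact (aux_schur R hR (Zi i) _ (hG i) (hGH i)).smul hTi0
    · have hterm : ∀ i, (((p i : ℂ) • ρ i) * (R⁻¹ * ((q i : ℂ) • σ i) * R⁻¹)).trace =
          ((T⁻¹ : ℝ) : ℂ) * (((q i : ℂ) • σ i) * R⁻¹).trace := by
        intro i
        rw [hW, Matrix.smul_mul, Matrix.trace_smul, smul_eq_mul, hqσ]
        congr 2
        calc Zi i * (K i * K i) * (Zi i)ᴴ * (R⁻¹ * (Zi i * (Zi i)ᴴ) * R⁻¹)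
            = Zi i * ((K i * K i) * ((Zi i)ᴴ * R⁻¹ * Zi i)) * ((Zi i)ᴴ * R⁻¹) := by
              simp only [Matrix.mul_assoc]
          _ = _ := by rw [hGH, Matrix.mul_one, Matrix.mul_assoc]
      simp_rw [hterm]
      rw [← Finset.mul_sum, ← Matrix.trace_sum, ← Finset.sum_mul, ← hR2, Matrix.mul_assoc,
        Matrix.mul_nonsing_inv _ hu, Matrix.mul_one, Matrix.trace_smul, smul_eq_mul]
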